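/- arXiv:2510.00616 — 10 statements merged into one kernel-verified Lean document; each statement's English description precedes it below -/
import Mathlib

section
/- For all nonnegative integers n₁, n₂, n₃, the following identity of binomial coefficients holds: C(2n₁+n₂+2n₃+1, 2n₃) + C(n₂+2n₃, 2n₃) = Σ_{n₄=0}^{n₃} [C(n₁+n₂+n₃+n₄+1, 2n₄) + C(n₁+n₂+n₃+n₄, 2n₄)] · C(n₁+n₃−n₄, 2(n₃−n₄)), where C(a,b) denotes the ordinary binomial coefficient of nonnegative integers (equal to 0 when b > a). -/
/-- The Morgan-Voyce polynomial `∑ k, C(n + k, 2k) X ^ k`, as a power series. -/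
noncomputable def morganVoyce (n : ℕ) : PowerSeries ℤ :=
  PowerSeries.mk fun k => ((n + k).choose (2 * k) : ℤ)

lemma coeff_morganVoyce (n k : ℕ) :
    PowerSeries.coeff k (morganVoyce n) = ((n + k).choose (2 * k) : ℤ) :=
  PowerSeries.coeff_mk _ _

lemma morganVoyce_zero : morganVoyce 0 = 1 := by
  ext k
  rw [coeff_morganVoyce, PowerSeries.coeff_one]
  rcases k with _ | k
  · simp
  · rw [Nat.choose_eq_zero_of_lt (by omega)]
    simp

lemma morganVoyce_one : morganVoyce 1 = 1 + PowerSeries.X := by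
  ext k
  rw [coeff_morganVoyce, map_add, PowerSeries.coeff_one, PowerSeries.coeff_X]
  rcases k with _ | _ | k
  · simp
  · simp
  · rw [Nat.choose_eq_zero_of_lt (by omega)]
    simp

lemma morganVoyce_add_two (n : ℕ) :
    morganVoyce (n + 2) = (PowerSeries.X + 2) * morganVoyce (n + 1) - morganVoyce n := by
  rw [add_mul, two_mul]
  ext k
  rcases k with _ | k
  · simp only [map_add, map_sub, PowerSeries.coeff_zero_X_mul, coeff_morganVoyce]
    simp
  · simp only [map_add, map_sub, PowerSeries.coeff_succ_X_mul, coeff_morganVoyce]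
    have pascal (m j : ℕ) : ((m + 1).choose (j + 1) : ℤ) = m.choose j + m.choose (j + 1) := by
      exact_mod_cast Nat.choose_succ_succ m j
    rw [show n + 2 + (k + 1) = n + k + 1 + 1 + 1 by ring,
      show n + 1 + (k + 1) = n + k + 1 + 1 by ring, show n + 1 + k = n + k + 1 by ring,
      show n + (k + 1) = n + k + 1 by ring, show 2 * (k + 1) = 2 * k + 1 + 1 by ring]
    linarith [pascal (n + k + 1 + 1) (2 * k + 1), pascal (n + k + 1) (2 * k + 1),
      pascal (n + k + 1) (2 * k)]

/-- Product-to-sum formula for Morgan-Voyce polynomials. -/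
lemma morganVoyce_add_mul (a m : ℕ) :
    (morganVoyce (m + a + 1) + morganVoyce (m + a)) * morganVoyce a =
      morganVoyce (m + 2 * a + 1) + morganVoyce m := by
  induction a using Nat.twoStepInduction generalizing m with
  | zero => simp [morganVoyce_zero]
  | one =>
    rw [morganVoyce_one, show m + 2 * 1 + 1 = m + 1 + 2 by ring, morganVoyce_add_two (m + 1),
      morganVoyce_add_two m]
    ring
  | more a ih ih' =>
    have h := ih (m + 2)
    have h' := ih' (m + 1)
    have r := morganVoyce_add_two (m + 2 * a + 3)
    rw [show m + 2 + a = m + a + 2 by ring, show m + 2 + 2 * a + 1 = m + 2 * a + 3 by ring] at h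
    rw [show m + 1 + (a + 1) = m + a + 2 by ring,
      show m + 1 + 2 * (a + 1) + 1 = m + 2 * a + 3 + 1 by ring] at h'
    rw [show m + (a + 2) = m + a + 2 by ring,
      show m + 2 * (a + 2) + 1 = m + 2 * a + 3 + 2 by ring, morganVoyce_add_two a]
    linear_combination (PowerSeries.X + 2) * h' - h - r - morganVoyce_add_two m

theorem stmt_0 (n₁ n₂ n₃ : ℕ) :
    (2 * n₁ + n₂ + 2 * n₃ + 1).choose (2 * n₃) + (n₂ + 2 * n₃).choose (2 * n₃) =
      ∑ n₄ ∈ Finset.range (n₃ + 1),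
        ((n₁ + n₂ + n₃ + n₄ + 1).choose (2 * n₄) + (n₁ + n₂ + n₃ + n₄).choose (2 * n₄)) *
          (n₁ + n₃ - n₄).choose (2 * (n₃ - n₄)) := by
  have h := congrArg (PowerSeries.coeff n₃) (morganVoyce_add_mul n₁ (n₂ + n₃))
  rw [PowerSeries.coeff_mul, Finset.Nat.sum_antidiagonal_eq_sum_range_succ_mk] at h
  simp only [map_add, coeff_morganVoyce] at h
  rw [show n₂ + n₃ + 2 * n₁ + 1 + n₃ = 2 * n₁ + n₂ + 2 * n₃ + 1 by ring,
    show n₂ + n₃ + n₃ = n₂ + 2 * n₃ by ring] at h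
  zify
  rw [← h]
  refine Finset.sum_congr rfl fun k hk => ?_
  have hk' : k ≤ n₃ := Nat.lt_succ_iff.mp (Finset.mem_range.mp hk)
  rw [show n₂ + n₃ + n₁ + 1 + k = n₁ + n₂ + n₃ + k + 1 by ring,
    show n₂ + n₃ + n₁ + k = n₁ + n₂ + n₃ + k by ring, Nat.add_sub_assoc hk']
end

section
/- For all nonnegative integers n₁, n₂, n₃, the following identity of binomial coefficients holds: C(2n₁+n₂+2n₃+2, 2n₃) + C(n₂+2n₃, 2n₃) = Σ_{n₄=0}^{n₃} C(n₁+n₂+n₃+n₄+1, 2n₄) · [C(n₁+n₃−n₄+1, 2(n₃−n₄)) + C(n₁+n₃−n₄, 2(n₃−n₄))], where C(a,b) denotes the ordinary binomial coefficient of nonnegative integers (equal to 0 when b > a). -/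
open Polynomial in
/-- Homogenized Morgan-Voyce polynomial `b_n`, evaluated at `(X ^ 2, 1 + X)`. -/
noncomputable def morganVoyceEven (n : ℕ) : ℤ[X] :=
  ∑ k ∈ Finset.range (n + 1), ((n + k).choose (2 * k) : ℤ[X]) * (X ^ (2 * k) * (1 + X) ^ (n - k))

open Polynomial in
/-- Homogenized Morgan-Voyce polynomial `B_n`, evaluated at `(X ^ 2, 1 + X)`. -/
noncomputable def morganVoyceOdd (n : ℕ) : ℤ[X] :=
  ∑ k ∈ Finset.range (n + 1),
    ((n + 1 + k).choose (2 * k + 1) : ℤ[X]) * (X ^ (2 * k) * (1 + X) ^ (n - k))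

open Polynomial in
theorem one_add_X_mul_morganVoyceEven (n : ℕ) :
    (1 + X) * morganVoyceEven n = ∑ k ∈ Finset.range (n + 2),
      ((n + k).choose (2 * k) : ℤ[X]) * (X ^ (2 * k) * (1 + X) ^ (n + 1 - k)) := by
  rw [Finset.sum_range_succ, Nat.choose_eq_zero_of_lt (by lia : n + (n + 1) < 2 * (n + 1)),
    morganVoyceEven, Finset.mul_sum]
  simp only [Nat.cast_zero, zero_mul, add_zero]
  refine Finset.sum_congr rfl fun k hk => ?_
  rw [Finset.mem_range] at hk
  rw [show n + 1 - k = n - k + 1 by lia]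
  ring

open Polynomial in
theorem one_add_X_mul_morganVoyceOdd (n : ℕ) :
    (1 + X) * morganVoyceOdd n = ∑ k ∈ Finset.range (n + 2),
      ((n + 1 + k).choose (2 * k + 1) : ℤ[X]) * (X ^ (2 * k) * (1 + X) ^ (n + 1 - k)) := by
  rw [Finset.sum_range_succ,
    Nat.choose_eq_zero_of_lt (by lia : n + 1 + (n + 1) < 2 * (n + 1) + 1),
    morganVoyceOdd, Finset.mul_sum]
  simp only [Nat.cast_zero, zero_mul, add_zero]
  refine Finset.sum_congr rfl fun k hk => ?_
  rw [Finset.mem_range] at hk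
  rw [show n + 1 - k = n - k + 1 by lia]
  ring

open Polynomial in
theorem morganVoyceEven_succ (n : ℕ) :
    morganVoyceEven (n + 1) = (1 + X) * morganVoyceEven n + X ^ 2 * morganVoyceOdd n := by
  rw [one_add_X_mul_morganVoyceEven, morganVoyceEven, Finset.sum_range_succ',
    Finset.sum_range_succ' _ (n + 1), morganVoyceOdd, Finset.mul_sum, add_right_comm (Finset.sum _ _),
    ← Finset.sum_add_distrib]
  congr 1
  · refine Finset.sum_congr rfl fun k _ => ?_
    rw [show n + 1 + (k + 1) = n + 1 + k + 1 by ring, show 2 * (k + 1) = 2 * k + 1 + 1 by ring,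
      Nat.choose_succ_succ' (n + 1 + k), show n + (k + 1) = n + 1 + k by ring,
      show n + 1 - (k + 1) = n - k by lia]
    push_cast
    ring
  · simp

open Polynomial in
theorem morganVoyceOdd_succ (n : ℕ) :
    morganVoyceOdd (n + 1) = (1 + X) * morganVoyceOdd n + morganVoyceEven (n + 1) := by
  rw [one_add_X_mul_morganVoyceOdd, morganVoyceEven, morganVoyceOdd, ← Finset.sum_add_distrib]
  refine Finset.sum_congr rfl fun k _ => ?_
  rw [show n + 1 + 1 + k = n + 1 + k + 1 by ring, Nat.choose_succ_succ' (n + 1 + k)]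
  push_cast
  ring

open Polynomial in
theorem morganVoyce_closed_form (n : ℕ) :
    (2 + X) * morganVoyceEven n = (1 + X) ^ (2 * n + 1) + 1 ∧
      X * (2 + X) * morganVoyceOdd n = (1 + X) ^ (2 * n + 2) - 1 := by
  induction n with
  | zero => constructor <;> simp [morganVoyceEven, morganVoyceOdd] <;> ring
  | succ n ih =>
    obtain ⟨hEven, hOdd⟩ := ih
    have hEven' : (2 + X) * morganVoyceEven (n + 1) = (1 + X) ^ (2 * (n + 1) + 1) + 1 := by
      rw [morganVoyceEven_succ]
      linear_combination (1 + X) * hEven + X * hOdd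
    refine ⟨hEven', ?_⟩
    rw [morganVoyceOdd_succ]
    linear_combination (1 + X) * hOdd + X * hEven'

open Polynomial in
theorem sum_choose_add_choose_mul_X_pow (a : ℕ) :
    ∑ k ∈ Finset.range (a + 2), (((a + k + 1).choose (2 * k) + (a + k).choose (2 * k) : ℕ) : ℤ[X]) *
      (X ^ (2 * k) * (1 + X) ^ (a + 1 - k)) = (1 + X) ^ (2 * a + 2) + 1 := by
  have hsum : ∑ k ∈ Finset.range (a + 2),
      (((a + k + 1).choose (2 * k) + (a + k).choose (2 * k) : ℕ) : ℤ[X]) *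
        (X ^ (2 * k) * (1 + X) ^ (a + 1 - k)) =
      morganVoyceEven (a + 1) + (1 + X) * morganVoyceEven a := by
    rw [one_add_X_mul_morganVoyceEven, morganVoyceEven, ← Finset.sum_add_distrib]
    refine Finset.sum_congr rfl fun k _ => ?_
    rw [show a + 1 + k = a + k + 1 by ring]
    push_cast
    ring
  have hne : (2 + X : ℤ[X]) ≠ 0 := by
    rw [add_comm]
    exact X_add_C_ne_zero (2 : ℤ)
  apply mul_left_cancel₀ hne
  rw [hsum]
  linear_combination (morganVoyce_closed_form (a + 1)).1 + (1 + X) * (morganVoyce_closed_form a).1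

open Polynomial in
theorem sum_choose_mul_choose_add_choose (a b m : ℕ) :
    ∑ k ∈ Finset.range (m + 1), (a + b + 2 * m + 1 - k).choose (2 * m - 2 * k) *
      ((a + k + 1).choose (2 * k) + (a + k).choose (2 * k)) =
    (2 * a + b + 2 * m + 2).choose (2 * m) + (b + 2 * m).choose (2 * m) := by
  have hcoeff := congrArg (fun p : ℤ[X] => (p * (1 + X) ^ (b + 2 * m)).coeff (2 * m))
    (sum_choose_add_choose_mul_X_pow a)
  simp only [add_mul _ _ ((1 + X : ℤ[X]) ^ (b + 2 * m)), one_mul, ← pow_add, coeff_add,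
    coeff_one_add_X_pow, Finset.sum_mul, finsetSum_coeff] at hcoeff
  zify
  rw [show 2 * a + b + 2 * m + 2 = 2 * a + 2 + (b + 2 * m) by ring, ← hcoeff]
  have hterm : ∀ k ∈ Finset.range (a + 2),
      ((((a + k + 1).choose (2 * k) + (a + k).choose (2 * k) : ℕ) : ℤ[X]) *
        (X ^ (2 * k) * (1 + X) ^ (a + 1 - k)) * (1 + X) ^ (b + 2 * m)).coeff (2 * m) =
      if k ≤ m then (((a + b + 2 * m + 1 - k).choose (2 * m - 2 * k) *
        ((a + k + 1).choose (2 * k) + (a + k).choose (2 * k)) : ℕ) : ℤ) else 0 := by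
    intro k hk
    rw [Finset.mem_range] at hk
    rw [mul_assoc, mul_assoc, ← pow_add, show a + 1 - k + (b + 2 * m) = a + b + 2 * m + 1 - k by lia,
      ← C_eq_natCast, coeff_C_mul, coeff_X_pow_mul', coeff_one_add_X_pow]
    by_cases h : k ≤ m
    · rw [if_pos (by lia), if_pos h]
      push_cast
      ring
    · rw [if_neg (by lia), if_neg h, mul_zero]
  rw [Finset.sum_congr rfl hterm, ← Finset.sum_filter]
  symm
  push_cast
  refine Finset.sum_subset (fun k hk => ?_) fun k hk hk' => ?_
  · simp only [Finset.mem_filter, Finset.mem_range] at hk ⊢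
    lia
  · simp only [Finset.mem_filter, Finset.mem_range] at hk hk'
    rw [Nat.choose_eq_zero_of_lt (by lia : a + k + 1 < 2 * k),
      Nat.choose_eq_zero_of_lt (by lia : a + k < 2 * k)]
    simp

theorem stmt_1 (n₁ n₂ n₃ : ℕ) :
    (2 * n₁ + n₂ + 2 * n₃ + 2).choose (2 * n₃) + (n₂ + 2 * n₃).choose (2 * n₃) =
      ∑ n₄ ∈ Finset.range (n₃ + 1),
        (n₁ + n₂ + n₃ + n₄ + 1).choose (2 * n₄) *
          ((n₁ + n₃ - n₄ + 1).choose (2 * (n₃ - n₄)) + (n₁ + n₃ - n₄).choose (2 * (n₃ - n₄))) := by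
  rw [← sum_choose_mul_choose_add_choose, ← Finset.sum_range_reflect]
  refine Finset.sum_congr rfl fun k hk => ?_
  rw [Finset.mem_range] at hk
  rw [show n₃ + 1 - 1 - k = n₃ - k by lia,
    show n₁ + n₂ + 2 * n₃ + 1 - (n₃ - k) = n₁ + n₂ + n₃ + k + 1 by lia,
    show 2 * n₃ - 2 * (n₃ - k) = 2 * k by lia, show n₁ + (n₃ - k) = n₁ + n₃ - k by lia]
end

section
/- For every nonnegative integer n and every rational number x, one has x^(2n) + (x+1)^(2n) = Σ_{m=0}^{n} C(2n−m, m) · x^m (x+1)^m + Σ_{m=1}^{n} C(2n−m−1, m−1) · x^m (x+1)^m + (1 if n = 0 else 0). (The extra term for n = 0 encodes the convention C(−1,−1) = 1 used in the paper's formulation, in which the coefficient of x^m(x+1)^m is C(2n−m, m) + C(2n−m−1, m−1).) -/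
/-- The Fibonacci-type polynomial `∑ m ≤ N, C(N - m, m) y ^ m`. -/
def fibSum (y : ℚ) (N : ℕ) : ℚ :=
  ∑ m ∈ Finset.range (N + 1), ((N - m).choose m : ℚ) * y ^ m

theorem fibSum_zero (y : ℚ) : fibSum y 0 = 1 := by simp [fibSum]

theorem fibSum_one (y : ℚ) : fibSum y 1 = 1 := by simp [fibSum, Finset.sum_range_succ]

theorem fibSum_add_two (y : ℚ) (N : ℕ) :
    fibSum y (N + 2) = fibSum y (N + 1) + y * fibSum y N := by
  unfold fibSum
  rw [Finset.sum_range_succ, Finset.sum_range_succ', Finset.sum_range_succ' _ (N + 1),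
    Finset.mul_sum, add_right_comm (∑ k ∈ Finset.range (N + 1),
      ((N + 1 - (k + 1)).choose (k + 1) : ℚ) * y ^ (k + 1)), ← Finset.sum_add_distrib]
  have hlast : (N + 2 - (N + 2)).choose (N + 2) = 0 := by simp
  rw [hlast]
  simp only [Nat.cast_zero, zero_mul, add_zero, Nat.sub_zero, Nat.choose_zero_right]
  congr 1
  refine Finset.sum_congr rfl fun k hk => ?_
  rw [Finset.mem_range] at hk
  rw [show N + 2 - (k + 1) = (N - k) + 1 by omega, show N + 1 - (k + 1) = N - k by omega,
    Nat.choose_succ_succ]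
  push_cast
  ring

/-- Every summand of `fibSum y (2 * n)` beyond the index `n` vanishes. -/
theorem fibSum_two_mul (y : ℚ) (n : ℕ) :
    fibSum y (2 * n) = ∑ m ∈ Finset.range (n + 1), ((2 * n - m).choose m : ℚ) * y ^ m := by
  unfold fibSum
  symm
  refine Finset.sum_subset (Finset.range_subset_range.2 (by omega)) fun m _ hm => ?_
  rw [Finset.mem_range] at hm
  rw [Nat.choose_eq_zero_of_lt (by omega)]
  simp

/-- The power sums of the roots `x + 1` and `-x` of `t ^ 2 = t + x * (x + 1)`. -/
theorem neg_pow_add_pow_eq_fibSum (x : ℚ) (N : ℕ) :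
    (-x) ^ (N + 2) + (x + 1) ^ (N + 2) =
      fibSum (x * (x + 1)) (N + 2) + x * (x + 1) * fibSum (x * (x + 1)) N := by
  induction N using Nat.twoStepInduction with
  | zero => rw [fibSum_add_two, zero_add, fibSum_zero, fibSum_one]; ring
  | one =>
    rw [fibSum_add_two, fibSum_add_two _ 0, zero_add, fibSum_zero, fibSum_one]
    ring
  | more N ih₀ ih₁ =>
    have h₄ := fibSum_add_two (x * (x + 1)) (N + 2)
    have h₂ := fibSum_add_two (x * (x + 1)) N
    linear_combination ih₁ + x * (x + 1) * ih₀ - h₄ - x * (x + 1) * h₂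

theorem stmt_2 (n : ℕ) (x : ℚ) :
    x ^ (2 * n) + (x + 1) ^ (2 * n) =
      (∑ m ∈ Finset.range (n + 1), ((2 * n - m).choose m : ℚ) * x ^ m * (x + 1) ^ m) +
        (∑ m ∈ Finset.Icc 1 n, ((2 * n - m - 1).choose (m - 1) : ℚ) * x ^ m * (x + 1) ^ m) +
        (if n = 0 then 1 else 0) := by
  rcases n with _ | k
  · norm_num
  · have key := neg_pow_add_pow_eq_fibSum x (2 * k)
    rw [show 2 * k + 2 = 2 * (k + 1) by ring, (even_two_mul (k + 1)).neg_pow, fibSum_two_mul,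
      fibSum_two_mul, Finset.mul_sum] at key
    rw [key, if_neg k.succ_ne_zero, add_zero, ← Finset.Ico_add_one_right_eq_Icc,
      Finset.sum_Ico_eq_sum_range]
    congr 1
    · refine Finset.sum_congr rfl fun m _ => ?_
      rw [mul_pow]
      ring
    · refine Finset.sum_congr rfl fun m _ => ?_
      rw [show 2 * (k + 1) - (1 + m) - 1 = 2 * k - m by omega, Nat.add_sub_cancel_left,
        mul_pow]
      ring
end

section
/- For every nonnegative integer n and every rational number x, one has x^(2n+1) + (x+1)^(2n+1) = Σ_{m=0}^{n} C(2n−m, m) · (x^(m+1) (x+1)^m + x^m (x+1)^(m+1)), where C(a,b) denotes the ordinary binomial coefficient of nonnegative integers. -/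
open Finset in
/-- The weighted Fibonacci recurrence for the shallow-diagonal sums of Pascal's triangle. -/
theorem sum_antidiagonal_choose_mul_pow_add_two {R : Type*} [CommRing R] (p : R) (k : ℕ) :
    ∑ ij ∈ antidiagonal (k + 2), (ij.1.choose ij.2 : R) * p ^ ij.2 =
      (∑ ij ∈ antidiagonal (k + 1), (ij.1.choose ij.2 : R) * p ^ ij.2) +
        p * ∑ ij ∈ antidiagonal k, (ij.1.choose ij.2 : R) * p ^ ij.2 := by
  rw [Finset.Nat.antidiagonal_succ_succ', Finset.Nat.antidiagonal_succ']
  simp only [sum_cons, sum_map, Function.Embedding.prodMap, Function.Embedding.coeFn_mk,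
    Prod.map, Nat.succ_eq_add_one, Nat.choose_succ_succ, Nat.cast_add, mul_sum,
    Function.Embedding.refl_apply, Nat.choose_zero_right, add_mul, sum_add_distrib]
  simp [pow_succ, mul_comm, mul_assoc, add_left_comm, add_comm]

open Finset in
/-- The Binet formula for the recurrence with characteristic roots `x + 1` and `-x`. -/
theorem two_mul_add_one_mul_sum_antidiagonal_choose {R : Type*} [CommRing R] (x : R) (k : ℕ) :
    (2 * x + 1) * ∑ ij ∈ antidiagonal k, (ij.1.choose ij.2 : R) * (x * (x + 1)) ^ ij.2 =
      (x + 1) ^ (k + 1) - (-x) ^ (k + 1) := by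
  induction k using Nat.twoStepInduction with
  | zero => simp; ring
  | one => simp [Finset.Nat.antidiagonal_succ]; ring
  | more k ih₀ ih₁ =>
    rw [sum_antidiagonal_choose_mul_pow_add_two]
    linear_combination ih₁ + x * (x + 1) * ih₀

open Finset in
/-- Only the indices `m ≤ n` contribute to the diagonal sum of index `2 * n`. -/
theorem sum_antidiagonal_two_mul_choose {R : Type*} [CommRing R] (p : R) (n : ℕ) :
    ∑ ij ∈ antidiagonal (2 * n), (ij.1.choose ij.2 : R) * p ^ ij.2 =
      ∑ m ∈ range (n + 1), ((2 * n - m).choose m : R) * p ^ m := by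
  rw [← Finset.Nat.sum_antidiagonal_swap, Finset.Nat.sum_antidiagonal_eq_sum_range_succ_mk]
  symm
  apply sum_subset (range_subset_range.2 (by omega))
  intro m _ hm
  rw [mem_range] at hm
  simp [Nat.choose_eq_zero_of_lt (show 2 * n - m < m by omega)]

theorem stmt_3 (n : ℕ) (x : ℚ) :
    x ^ (2 * n + 1) + (x + 1) ^ (2 * n + 1) =
      ∑ m ∈ Finset.range (n + 1),
        ((2 * n - m).choose m : ℚ) * (x ^ (m + 1) * (x + 1) ^ m + x ^ m * (x + 1) ^ (m + 1)) := by
  have binet := two_mul_add_one_mul_sum_antidiagonal_choose x (2 * n)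
  rw [sum_antidiagonal_two_mul_choose, Odd.neg_pow (odd_two_mul_add_one n), Finset.mul_sum] at binet
  calc x ^ (2 * n + 1) + (x + 1) ^ (2 * n + 1)
      = (x + 1) ^ (2 * n + 1) - -x ^ (2 * n + 1) := by ring
    _ = _ := binet.symm
    _ = _ := Finset.sum_congr rfl fun m _ => by rw [mul_pow]; ring
end

section
/- For every nonnegative integer n and all rational numbers x and y, one has B(x+y+n, 2n) + B(x−y+n, 2n) = Σ_{m=0}^{n} B(x+m, 2m) · [B(y+n−m, 2(n−m)) + B(y−1+n−m, 2(n−m))], where B(t,k) denotes the generalized binomial coefficient t(t−1)⋯(t−k+1)/k! for a rational number t and a nonnegative integer k. -/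
open Finset Polynomial

/-- The generalized binomial coefficient `B(t + n, 2n)`, symmetric about `t = -1/2`. -/
noncomputable def centeredChoose (n : ℕ) (t : ℚ) : ℚ := Ring.choose (t + n) (2 * n)

lemma centeredChoose_zero (t : ℚ) : centeredChoose 0 t = 1 := by
  simp [centeredChoose]

lemma centeredChoose_succ_zero (n : ℕ) : centeredChoose (n + 1) 0 = 0 := by
  rw [centeredChoose, zero_add, Ring.choose_natCast, Nat.choose_eq_zero_of_lt (by omega),
    Nat.cast_zero]

lemma centeredChoose_neg (n : ℕ) (t : ℚ) : centeredChoose n (-t) = centeredChoose n (t - 1) := by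
  have h := Ring.choose_neg (t - n) (2 * n)
  rw [Int.negOnePow_even _ (by simp), one_smul] at h
  unfold centeredChoose
  convert h using 2
  · ring
  · push_cast
    ring

lemma centeredChoose_second_difference (n : ℕ) (t : ℚ) :
    centeredChoose (n + 1) (t + 1) - 2 * centeredChoose (n + 1) t
      + centeredChoose (n + 1) (t - 1) = centeredChoose n t := by
  have h₁ := Ring.choose_succ_succ (t + n + 1) (2 * n + 1)
  have h₂ := Ring.choose_succ_succ (t + n) (2 * n + 1)
  have h₃ := Ring.choose_succ_succ (t + n) (2 * n)
  have e₁ : t + 1 + ((n + 1 : ℕ) : ℚ) = t + n + 1 + 1 := by push_cast; ring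
  have e₂ : t + ((n + 1 : ℕ) : ℚ) = t + n + 1 := by push_cast; ring
  have e₃ : t - 1 + ((n + 1 : ℕ) : ℚ) = t + n := by push_cast; ring
  simp only [centeredChoose, e₁, e₂, e₃, show 2 * (n + 1) = 2 * n + 1 + 1 by ring]
  linarith

lemma exists_polynomial_eval_eq_centeredChoose (n : ℕ) :
    ∃ p : ℚ[X], ∀ t, p.eval t = centeredChoose n t := by
  refine ⟨(C ((2 * n).factorial : ℚ)⁻¹ * descPochhammer ℚ (2 * n)).comp (X + C (n : ℚ)),
    fun t => ?_⟩
  rw [centeredChoose, Ring.choose_eq_smul, ← aeval_eq_smeval,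
    ← descPochhammer_map (algebraMap ℤ ℚ)]
  simp only [eval_comp, eval_mul, eval_C, eval_add, eval_X, eval_map_algebraMap, smul_eq_mul]

/-- A polynomial function whose second difference is zero, and which vanishes at `0` and `1`, is zero. -/
lemma polynomial_eq_zero_of_second_difference {p : ℚ[X]} (h₀ : p.eval 0 = 0) (h₁ : p.eval 1 = 0)
    (h : ∀ t, p.eval (t + 1) - 2 * p.eval t + p.eval (t - 1) = 0) : p = 0 := by
  have key : ∀ k : ℕ, p.eval (k : ℚ) = 0 ∧ p.eval ((k : ℚ) + 1) = 0 := by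
    intro k
    induction k with
    | zero => simp [h₀, h₁]
    | succ k ih =>
      have := h (k + 1)
      rw [add_sub_cancel_right, ih.1, ih.2] at this
      push_cast
      exact ⟨ih.2, by linarith⟩
  exact p.eq_zero_of_infinite_isRoot <|
    (Set.infinite_range_of_injective (Nat.cast_injective (R := ℚ))).mono <| by
      rintro _ ⟨k, rfl⟩
      exact (key k).1

lemma centeredChoose_add_add_sub (n : ℕ) (x y : ℚ) :
    centeredChoose n (x + y) + centeredChoose n (x - y) =
      ∑ a ∈ antidiagonal n,
        centeredChoose a.1 x * (centeredChoose a.2 y + centeredChoose a.2 (-y)) := by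
  induction n generalizing y with
  | zero => simp [centeredChoose_zero]
  | succ n ih =>
    choose p hp using exists_polynomial_eval_eq_centeredChoose
    let d : ℚ[X] := (p (n + 1)).comp (C x + X) + (p (n + 1)).comp (C x - X) -
      ∑ a ∈ antidiagonal (n + 1),
        C (centeredChoose a.1 x) * (p a.2 + (p a.2).comp (-X))
    have hd : ∀ t, d.eval t = centeredChoose (n + 1) (x + t) + centeredChoose (n + 1) (x - t) -
        ∑ a ∈ antidiagonal (n + 1),
          centeredChoose a.1 x * (centeredChoose a.2 t + centeredChoose a.2 (-t)) := by
      intro t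
      simp [d, eval_finsetSum, hp]
    have hdiff : ∀ t, d.eval (t + 1) - 2 * d.eval t + d.eval (t - 1) = 0 := by
      intro t
      have hx₁ := centeredChoose_second_difference n (x + t)
      have hx₂ := centeredChoose_second_difference n (x - t)
      have hsum : ∑ a ∈ antidiagonal n,
            centeredChoose a.1 x * (centeredChoose a.2 t + centeredChoose a.2 (-t)) =
          ∑ a ∈ antidiagonal n, centeredChoose a.1 x *
            (centeredChoose (a.2 + 1) (t + 1) + centeredChoose (a.2 + 1) (-(t + 1))) -
          2 * ∑ a ∈ antidiagonal n, centeredChoose a.1 x *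
            (centeredChoose (a.2 + 1) t + centeredChoose (a.2 + 1) (-t)) +
          ∑ a ∈ antidiagonal n, centeredChoose a.1 x *
            (centeredChoose (a.2 + 1) (t - 1) + centeredChoose (a.2 + 1) (-(t - 1))) := by
        rw [mul_sum, ← sum_sub_distrib, ← sum_add_distrib]
        refine sum_congr rfl fun a _ => ?_
        rw [← centeredChoose_second_difference a.2 t, ← centeredChoose_second_difference a.2 (-t),
          show -(t + 1) = -t - 1 by ring, show -(t - 1) = -t + 1 by ring]
        ring
      have := ih t
      simp only [hd, Nat.sum_antidiagonal_succ', centeredChoose_zero]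
      rw [show x + (t + 1) = x + t + 1 by ring, show x - (t + 1) = x - t - 1 by ring,
        show x + (t - 1) = x + t - 1 by ring, show x - (t - 1) = x - t + 1 by ring]
      linarith
    have h₀ : d.eval 0 = 0 := by
      simp [hd, Nat.sum_antidiagonal_succ', centeredChoose_zero, centeredChoose_succ_zero]
      ring
    have heven : d.eval (-1) = d.eval 1 := by
      simp only [hd, neg_neg, sub_neg_eq_add, ← sub_eq_add_neg]
      simp only [add_comm]
    have h₁ : d.eval 1 = 0 := by
      have := hdiff 0
      rw [zero_add, zero_sub, h₀, heven] at this
      linarith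
    have := hd y
    rw [polynomial_eq_zero_of_second_difference h₀ h₁ hdiff, eval_zero] at this
    linarith

theorem stmt_4 (n : ℕ) (x y : ℚ) :
    Ring.choose (x + y + n) (2 * n) + Ring.choose (x - y + n) (2 * n) =
      ∑ m ∈ Finset.range (n + 1),
        Ring.choose (x + m) (2 * m) *
          (Ring.choose (y + (n - m : ℕ)) (2 * (n - m)) +
            Ring.choose (y - 1 + (n - m : ℕ)) (2 * (n - m))) := by
  have h := centeredChoose_add_add_sub n x y
  simp only [centeredChoose_neg] at h
  rwa [Nat.sum_antidiagonal_eq_sum_range_succ_mk] at h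
end

section
/- For every nonnegative integer n and all rational numbers x and y, one has B(x+y+n, 2n+1) + B(x−y+n, 2n+1) = Σ_{m=0}^{n} B(x+m, 2m+1) · [B(y+n−m, 2(n−m)) + B(y−1+n−m, 2(n−m))], where B(t,k) denotes the generalized binomial coefficient t(t−1)⋯(t−k+1)/k! for a rational number t and a nonnegative integer k. -/
open Polynomial in
/-- For a fixed shift `a`, the map `x ↦ Ring.choose (x + a) k` on `ℚ` is polynomial. -/
theorem exists_polynomial_eval_eq_choose_add (a : ℚ) (k : ℕ) :
    ∃ p : ℚ[X], ∀ x, p.eval x = Ring.choose (x + a) k := by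
  refine ⟨(C ((k.factorial : ℚ)⁻¹) * descPochhammer ℚ k).comp (X + C a), fun x => ?_⟩
  rw [Ring.choose_eq_smul, ← descPochhammer_map (algebraMap ℤ ℚ), eval_comp, eval_mul, eval_map,
    ← aeval_def, aeval_eq_smeval]
  simp

/-- The central binomial coefficient of odd order, as a function of `x`, has second central
difference the one of the preceding odd order. -/
theorem choose_central_odd_add_one (m : ℕ) (x : ℚ) :
    Ring.choose (x + 1 + (m + 1 : ℕ)) (2 * (m + 1) + 1) =
      2 * Ring.choose (x + (m + 1 : ℕ)) (2 * (m + 1) + 1)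
        - Ring.choose (x - 1 + (m + 1 : ℕ)) (2 * (m + 1) + 1)
        + Ring.choose (x + m) (2 * m + 1) := by
  have h₁ := Ring.choose_succ_succ (x + m + 1) (2 * m + 2)
  have h₂ := Ring.choose_succ_succ (x + m) (2 * m + 2)
  have h₃ := Ring.choose_succ_succ (x + m) (2 * m + 1)
  have e₁ : x + 1 + ((m + 1 : ℕ) : ℚ) = x + m + 1 + 1 := by push_cast; ring
  have e₂ : x + ((m + 1 : ℕ) : ℚ) = x + m + 1 := by push_cast; ring
  have e₃ : x - 1 + ((m + 1 : ℕ) : ℚ) = x + m := by push_cast; ring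
  rw [e₁, e₂, e₃, show 2 * (m + 1) + 1 = 2 * m + 2 + 1 by ring]
  linarith

/-- The central binomial coefficient of odd order is an odd function. -/
theorem choose_central_odd_neg (n : ℕ) (y : ℚ) :
    Ring.choose (-y + n) (2 * n + 1) = -Ring.choose (y + n) (2 * n + 1) := by
  have h := Ring.choose_neg (y - n) (2 * n + 1)
  rw [show -(y - n) = -y + (n : ℚ) by ring,
    show y - n + ((2 * n + 1 : ℕ) : ℚ) - 1 = y + n by push_cast; ring] at h
  rw [h, Int.negOnePow_odd _ ⟨n, by push_cast; ring⟩]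
  simp

theorem choose_central_odd_zero (n : ℕ) : Ring.choose (0 + n : ℚ) (2 * n + 1) = 0 := by
  rw [zero_add, Ring.choose_natCast, Nat.choose_eq_zero_of_lt (by lia), Nat.cast_zero]

/-- The sum of products of central binomial coefficients of complementary orders. -/
noncomputable def centralChooseSum (n : ℕ) (x y : ℚ) : ℚ :=
  ∑ m ∈ Finset.range (n + 1),
    Ring.choose (x + m) (2 * m + 1) *
      (Ring.choose (y + (n - m : ℕ)) (2 * (n - m)) +
        Ring.choose (y - 1 + (n - m : ℕ)) (2 * (n - m)))

theorem centralChooseSum_zero (n : ℕ) (y : ℚ) : centralChooseSum n 0 y = 0 :=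
  Finset.sum_eq_zero fun m _ => by rw [choose_central_odd_zero, zero_mul]

theorem centralChooseSum_one (n : ℕ) (y : ℚ) :
    centralChooseSum n 1 y = Ring.choose (1 + y + n) (2 * n + 1)
      + Ring.choose (1 - y + n) (2 * n + 1) := by
  have hsum : centralChooseSum n 1 y =
      Ring.choose (y + n) (2 * n) + Ring.choose (y - 1 + n) (2 * n) := by
    rw [centralChooseSum, Finset.sum_eq_single 0]
    · simp
    · intro m _ hm
      rw [show (1 + m : ℚ) = ((1 + m : ℕ) : ℚ) by push_cast; ring, Ring.choose_natCast,
        Nat.choose_eq_zero_of_lt (by lia), Nat.cast_zero, zero_mul]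
    · simp
  have h₁ := Ring.choose_succ_succ (y + n) (2 * n)
  have h₂ := Ring.choose_succ_succ (y - 1 + n) (2 * n)
  rw [show y + n + 1 = 1 + y + (n : ℚ) by ring] at h₁
  rw [show y - 1 + n + 1 = y + (n : ℚ) by ring] at h₂
  rw [hsum, show 1 - y = -(y - 1) by ring, choose_central_odd_neg]
  linarith

theorem centralChooseSum_add_one (n : ℕ) (x y : ℚ) :
    centralChooseSum (n + 1) (x + 1) y =
      2 * centralChooseSum (n + 1) x y - centralChooseSum (n + 1) (x - 1) y
        + centralChooseSum n x y := by
  simp only [centralChooseSum, Finset.sum_range_succ' _ (n + 1), choose_central_odd_add_one,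
    Nat.add_sub_add_right, add_mul, sub_mul, Finset.sum_add_distrib, Finset.sum_sub_distrib,
    mul_assoc, ← Finset.mul_sum]
  simp only [Nat.cast_zero, add_zero, mul_zero, zero_add, Ring.choose_one_right]
  ring

open Polynomial in
/-- The addition formula follows for all rational `x` once it is known for natural `x`. -/
theorem choose_add_choose_eq_of_natCast (n : ℕ) (y : ℚ)
    (h : ∀ k : ℕ, Ring.choose (k + y + n) (2 * n + 1) + Ring.choose (k - y + n) (2 * n + 1) =
      centralChooseSum n k y) (x : ℚ) :
    Ring.choose (x + y + n) (2 * n + 1) + Ring.choose (x - y + n) (2 * n + 1) =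
      centralChooseSum n x y := by
  choose p hp using exists_polynomial_eval_eq_choose_add
  let l : ℚ[X] := p (y + n) (2 * n + 1) + p (-y + n) (2 * n + 1)
  let r : ℚ[X] := ∑ m ∈ Finset.range (n + 1), p m (2 * m + 1) *
    C (Ring.choose (y + (n - m : ℕ)) (2 * (n - m)) +
        Ring.choose (y - 1 + (n - m : ℕ)) (2 * (n - m)))
  have hl (t : ℚ) : l.eval t =
      Ring.choose (t + y + n) (2 * n + 1) + Ring.choose (t - y + n) (2 * n + 1) := by
    simp only [l, eval_add, hp, ← add_assoc, ← sub_eq_add_neg]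
  have hr (t : ℚ) : r.eval t = centralChooseSum n t y := by
    simp only [r, eval_finsetSum, eval_mul, eval_C, hp, centralChooseSum]
  have hlr : l = r := by
    refine eq_of_infinite_eval_eq l r
      ((Set.infinite_range_of_injective (Nat.cast_injective (R := ℚ))).mono ?_)
    rintro _ ⟨k, rfl⟩
    exact (hl k).trans ((h k).trans (hr k).symm)
  rw [← hl, ← hr, hlr]

theorem stmt_5 (n : ℕ) (x y : ℚ) :
    Ring.choose (x + y + n) (2 * n + 1) + Ring.choose (x - y + n) (2 * n + 1) =
      ∑ m ∈ Finset.range (n + 1),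
        Ring.choose (x + m) (2 * m + 1) *
          (Ring.choose (y + (n - m : ℕ)) (2 * (n - m)) +
            Ring.choose (y - 1 + (n - m : ℕ)) (2 * (n - m))) := by
  change _ = centralChooseSum n x y
  induction n generalizing x with
  | zero => simp [centralChooseSum]; ring
  | succ n ih =>
    refine choose_add_choose_eq_of_natCast (n + 1) y (fun k => ?_) x
    induction k using Nat.twoStepInduction with
    | zero =>
      rw [Nat.cast_zero, centralChooseSum_zero, zero_add, zero_sub, choose_central_odd_neg,
        add_neg_cancel]
    | one => rw [Nat.cast_one, centralChooseSum_one]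
    | more k h₀ h₁ =>
      have hs := centralChooseSum_add_one n ((k + 1 : ℕ) : ℚ) y
      have hp := choose_central_odd_add_one n (((k + 1 : ℕ) : ℚ) + y)
      have hm := choose_central_odd_add_one n (((k + 1 : ℕ) : ℚ) - y)
      have e : ((k + 1 : ℕ) : ℚ) - 1 = k := by push_cast; ring
      rw [add_right_comm _ y 1, add_sub_right_comm, e] at hp
      rw [sub_add_eq_add_sub _ y 1, sub_right_comm, e] at hm
      rw [e] at hs
      rw [show ((k + 2 : ℕ) : ℚ) = ((k + 1 : ℕ) : ℚ) + 1 by push_cast; ring, hs, ← h₀, ← h₁,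
        ← ih]
      linarith
end

section
/- For every nonnegative integer n and all rational numbers x and y, one has Σ_{m=0}^{n} B(x−m, m) · B(y+m, n−m) = S_n(x+y), where S_n(t) := Σ_{m=0}^{n} B(t−m, m) · C(m, n−m), B(t,k) is the generalized binomial coefficient t(t−1)⋯(t−k+1)/k!, and C(a,b) is the ordinary binomial coefficient of nonnegative integers. -/
/-- `S n t = ∑_{m=0}^{n} B(t - m, m) * C(m, n - m)` for `n ≥ 0`, and `0` for `n < 0`. -/
noncomputable def S (n : ℤ) (t : ℚ) : ℚ :=
  if 0 ≤ n then
    ∑ m ∈ Finset.range (n.toNat + 1), Ring.choose (t - m) m * (m.choose (n.toNat - m) : ℚ)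
  else 0

open Finset Polynomial

/-- The convolution `∑_{m=0}^{n} B(x - m, m) * B(y + m, n - m)`. -/
noncomputable def chooseConv (n : ℕ) (x y : ℚ) : ℚ :=
  ∑ m ∈ range (n + 1), Ring.choose (x - m) m * Ring.choose (y + m) (n - m)

theorem chooseConv_zero (x y : ℚ) : chooseConv 0 x y = 1 := by
  simp [chooseConv]

theorem chooseConv_succ_add_one_right (n : ℕ) (x y : ℚ) :
    chooseConv (n + 1) x (y + 1) = chooseConv (n + 1) x y + chooseConv n x y := by
  unfold chooseConv
  rw [sum_range_succ, sum_range_succ _ (n + 1), add_right_comm _ (Ring.choose _ _ * _), ← sum_add_distrib]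
  congr 1
  · refine sum_congr rfl fun m hm => ?_
    have hm' : m ≤ n := Nat.lt_succ_iff.mp (mem_range.mp hm)
    rw [Nat.succ_sub hm', Nat.succ_eq_add_one, add_right_comm y 1, Ring.choose_succ_succ]
    ring
  · simp

theorem chooseConv_succ_add_one_left (n : ℕ) (x y : ℚ) :
    chooseConv (n + 1) (x + 1) y =
      chooseConv (n + 1) x y + chooseConv n (x - 1) (y + 1) := by
  unfold chooseConv
  rw [sum_range_succ', sum_range_succ' _ (n + 1), add_right_comm, ← sum_add_distrib]
  congr 1
  · refine sum_congr rfl fun m _ => ?_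
    have h₁ : x + 1 - ((m + 1 : ℕ) : ℚ) = (x - 1 - m) + 1 := by push_cast; ring
    have h₂ : x - ((m + 1 : ℕ) : ℚ) = x - 1 - m := by push_cast; ring
    have h₃ : y + ((m + 1 : ℕ) : ℚ) = y + 1 + m := by push_cast; ring
    rw [h₁, h₂, h₃, Ring.choose_succ_succ, Nat.add_sub_add_right]
    ring
  · simp

theorem chooseConv_add_one_comm (n : ℕ) (x y : ℚ) :
    chooseConv n (x + 1) y = chooseConv n x (y + 1) := by
  induction n generalizing x y with
  | zero => simp only [chooseConv_zero]
  | succ n ih =>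
    rw [chooseConv_succ_add_one_right, chooseConv_succ_add_one_left, ← ih, sub_add_cancel]

theorem chooseConv_sub_natCast (n k : ℕ) (t : ℚ) :
    chooseConv n (t - k) k = chooseConv n t 0 := by
  induction k with
  | zero => simp
  | succ k ih =>
    rw [← ih, Nat.cast_succ, ← chooseConv_add_one_comm]
    congr 1
    ring

theorem exists_polynomial_eval_eq_choose (k : ℕ) :
    ∃ p : ℚ[X], ∀ t : ℚ, p.eval t = Ring.choose t k :=
  ⟨C (k.factorial : ℚ)⁻¹ * descPochhammer ℚ k, fun t => by
    rw [Ring.choose_eq_smul, eval_mul, eval_C, smul_eq_mul,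
      ← descPochhammer_map (Int.castRingHom ℚ), eval_map, ← eval₂_smulOneHom_eq_smeval]
    congr 1
    exact congrArg (eval₂ · t _) (RingHom.ext_int _ _)⟩

theorem exists_polynomial_eval_eq_chooseConv (n : ℕ) (t : ℚ) :
    ∃ p : ℚ[X], ∀ y : ℚ, p.eval y = chooseConv n (t - y) y := by
  choose p hp using exists_polynomial_eval_eq_choose
  refine ⟨∑ m ∈ range (n + 1),
    (p m).comp (C t - X - C (m : ℚ)) * (p (n - m)).comp (X + C (m : ℚ)), fun y => ?_⟩
  simp [eval_finsetSum, hp, chooseConv]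

theorem chooseConv_sub_self (n : ℕ) (t y : ℚ) :
    chooseConv n (t - y) y = chooseConv n t 0 := by
  obtain ⟨p, hp⟩ := exists_polynomial_eval_eq_chooseConv n t
  have h : p = C (chooseConv n t 0) := by
    refine eq_of_infinite_eval_eq _ _
      ((Set.infinite_range_of_injective (Nat.cast_injective (R := ℚ))).mono ?_)
    rintro _ ⟨k, rfl⟩
    simp [hp, chooseConv_sub_natCast]
  rw [← hp, h, eval_C]

theorem S_natCast (n : ℕ) (t : ℚ) : S n t = chooseConv n t 0 := by
  simp [S, chooseConv, Ring.choose_natCast]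

theorem stmt_6 (n : ℕ) (x y : ℚ) :
    ∑ m ∈ Finset.range (n + 1), Ring.choose (x - m) m * Ring.choose (y + m) (n - m) =
      S n (x + y) := by
  rw [S_natCast, ← chooseConv_sub_self n (x + y) y, add_sub_cancel_right, chooseConv]
end

section
/- For every nonnegative integer n and every rational number x, one has S_n(x) − S_n(x−1) = S_{n−1}(x−1), where S_n(t) := Σ_{m=0}^{n} B(t−m, m) · C(m, n−m) for n ≥ 0 and S_n(t) := 0 for n < 0, B(t,k) is the generalized binomial coefficient t(t−1)⋯(t−k+1)/k!, and C(a,b) is the ordinary binomial coefficient of nonnegative integers. -/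
theorem S_natCast_s14 (n : ℕ) (t : ℚ) :
    S n t = ∑ m ∈ Finset.range (n + 1), Ring.choose (t - m) m * (m.choose (n - m) : ℚ) := by
  simp [S]

theorem S_zero (t : ℚ) : S (0 : ℕ) t = 1 := by
  rw [S_natCast_s14]
  simp

theorem S_one (t : ℚ) : S (1 : ℕ) t = t - 1 := by
  rw [S_natCast_s14]
  simp [Finset.sum_range_succ]

theorem S_add_two_sub (n : ℕ) (t : ℚ) :
    S (n + 2 : ℕ) t - S (n + 2 : ℕ) (t - 1) = S (n + 1 : ℕ) (t - 2) + S n (t - 2) := by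
  have pascal (j : ℕ) : Ring.choose (t - (j + 1 : ℕ)) (j + 1) =
      Ring.choose (t - 2 - j) j + Ring.choose (t - 1 - (j + 1 : ℕ)) (j + 1) := by
    have h := Ring.choose_succ_succ (t - 2 - j) j
    rw [show t - (j + 1 : ℕ) = t - 2 - j + 1 by push_cast; ring,
      show t - 1 - (j + 1 : ℕ) = t - 2 - j by push_cast; ring, h]
  have key : S (n + 2 : ℕ) t - S (n + 2 : ℕ) (t - 1) =
      ∑ j ∈ Finset.range (n + 2),
        Ring.choose (t - 2 - j) j * ((j + 1).choose (n + 1 - j) : ℚ) := by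
    rw [S_natCast_s14, S_natCast_s14, ← Finset.sum_sub_distrib, Finset.sum_range_succ']
    simp only [Nat.choose_zero_succ, Nat.sub_zero, Nat.cast_zero, mul_zero, sub_zero, add_zero]
    refine Finset.sum_congr rfl fun j _ => ?_
    rw [pascal, show n + 2 - (j + 1) = n + 1 - j by omega]
    ring
  rw [key, S_natCast_s14, S_natCast_s14, Finset.sum_range_succ, Finset.sum_range_succ _ (n + 1),
    add_right_comm (Finset.sum _ _), ← Finset.sum_add_distrib]
  congr 1
  · refine Finset.sum_congr rfl fun j hj => ?_
    have hj' : j ≤ n := Finset.mem_range_succ_iff.mp hj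
    rw [show n + 1 - j = n - j + 1 by omega, Nat.choose_succ_succ]
    push_cast
    ring
  · simp

theorem stmt_14 (n : ℕ) (x : ℚ) :
    S n x - S n (x - 1) = S ((n : ℤ) - 1) (x - 1) := by
  induction n generalizing x with
  | zero => rw [S_zero, S_zero]; simp [S]
  | succ n ih =>
    rw [show ((n + 1 : ℕ) : ℤ) - 1 = n by push_cast; ring]
    cases n with
    | zero => rw [S_zero, S_one, S_one]; ring
    | succ n =>
      have h := ih (x - 1)
      rw [show ((n + 1 : ℕ) : ℤ) - 1 = n by push_cast; ring,
        show x - 1 - 1 = x - 2 by ring] at h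
      rw [S_add_two_sub, ← h]
      ring
end

section
/- For every nonnegative integer n and all rational numbers x and y, one has Σ_{m=0}^{n} B(x+1−m, m) · B(y+m, n−m) = Σ_{m=0}^{n} B(x−m, m) · B(y+1+m, n−m), where B(t,k) denotes the generalized binomial coefficient t(t−1)⋯(t−k+1)/k!. -/
theorem stmt_15 (n : ℕ) (x y : ℚ) :
    ∑ m ∈ Finset.range (n + 1), Ring.choose (x + 1 - m) m * Ring.choose (y + m) (n - m) =
      ∑ m ∈ Finset.range (n + 1), Ring.choose (x - m) m * Ring.choose (y + 1 + m) (n - m) := by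
  induction n generalizing x y with
  | zero => simp
  | succ n ih =>
    -- By Pascal's rule both sides exceed the sum for `(n + 1, x, y)` by a sum for `n`.
    have left : ∑ m ∈ Finset.range (n + 1 + 1),
          Ring.choose (x + 1 - m) m * Ring.choose (y + m) (n + 1 - m) =
        ∑ m ∈ Finset.range (n + 1 + 1),
          Ring.choose (x - m) m * Ring.choose (y + m) (n + 1 - m) +
        ∑ m ∈ Finset.range (n + 1),
          Ring.choose (x - 1 - m) m * Ring.choose (y + 1 + m) (n - m) := by
      rw [Finset.sum_range_succ', Finset.sum_range_succ' _ (n + 1), add_right_comm,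
        ← Finset.sum_add_distrib]
      congr 1
      · refine Finset.sum_congr rfl fun m _ => ?_
        have pascal := Ring.choose_succ_succ (x - 1 - m) m
        rw [show x + 1 - ((m + 1 : ℕ) : ℚ) = x - 1 - m + 1 by push_cast; ring,
          show x - ((m + 1 : ℕ) : ℚ) = x - 1 - m by push_cast; ring,
          show y + ((m + 1 : ℕ) : ℚ) = y + 1 + m by push_cast; ring,
          Nat.add_sub_add_right, pascal]
        ring
      · simp
    have right : ∑ m ∈ Finset.range (n + 1 + 1),
          Ring.choose (x - m) m * Ring.choose (y + 1 + m) (n + 1 - m) =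
        ∑ m ∈ Finset.range (n + 1 + 1),
          Ring.choose (x - m) m * Ring.choose (y + m) (n + 1 - m) +
        ∑ m ∈ Finset.range (n + 1),
          Ring.choose (x - m) m * Ring.choose (y + m) (n - m) := by
      rw [Finset.sum_range_succ, Finset.sum_range_succ _ (n + 1), add_right_comm (Finset.sum _ _),
        ← Finset.sum_add_distrib]
      congr 1
      · refine Finset.sum_congr rfl fun m hm => ?_
        rw [Nat.succ_sub (Finset.mem_range_succ_iff.mp hm), add_right_comm y,
          Nat.succ_eq_add_one, Ring.choose_succ_succ]
        ring
      · simp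
    rw [left, right, ← ih (x - 1) y, sub_add_cancel]
end

section
/- For every positive integer n and all rational numbers x and y, one has Σ_{m=1}^{n} B(x−m, m−1) · B(y+m, n−m) = S_{n−1}(x+y), where S_k(t) := Σ_{m=0}^{k} B(t−m, m) · C(m, k−m), B(t,k) is the generalized binomial coefficient t(t−1)⋯(t−k+1)/k!, and C(a,b) is the ordinary binomial coefficient of nonnegative integers. -/
open Finset

section BinomialConvolution

variable {R : Type*} [CommRing R] [BinomialRing R]

/-- The convolution `∑_{m + k = N} B(a - m, m) B(b + m, k)`. -/
def slantedConvolution (N : ℕ) (a b : R) : R :=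
  ∑ p ∈ antidiagonal N, Ring.choose (a - p.1) p.1 * Ring.choose (b + p.1) p.2

theorem slantedConvolution_add_one_left (N : ℕ) (a b : R) :
    slantedConvolution (N + 1) (a + 1) b =
      slantedConvolution (N + 1) a b + slantedConvolution N (a - 1) (b + 1) := by
  simp only [slantedConvolution, Nat.sum_antidiagonal_succ, Ring.choose_zero_right]
  rw [add_assoc, ← sum_add_distrib]
  congr 1
  refine sum_congr rfl fun p _ => ?_
  have h₁ : a + 1 - ((p.1 + 1 : ℕ) : R) = a - 1 - p.1 + 1 := by push_cast; ring
  have h₂ : a - ((p.1 + 1 : ℕ) : R) = a - 1 - p.1 := by push_cast; ring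
  have h₃ : b + ((p.1 + 1 : ℕ) : R) = b + 1 + p.1 := by push_cast; ring
  rw [h₁, h₂, h₃, Ring.choose_succ_succ]
  ring

theorem slantedConvolution_add_one_right (N : ℕ) (a b : R) :
    slantedConvolution (N + 1) a (b + 1) =
      slantedConvolution (N + 1) a b + slantedConvolution N a b := by
  simp only [slantedConvolution, Nat.sum_antidiagonal_succ', Ring.choose_zero_right]
  rw [add_assoc, ← sum_add_distrib]
  congr 1
  refine sum_congr rfl fun p _ => ?_
  rw [add_right_comm, Ring.choose_succ_succ]
  ring

theorem slantedConvolution_shift_one (N : ℕ) (a b : R) :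
    slantedConvolution N (a + 1) b = slantedConvolution N a (b + 1) := by
  induction N generalizing a b with
  | zero => simp [slantedConvolution]
  | succ N ih =>
    rw [slantedConvolution_add_one_left, slantedConvolution_add_one_right, ← ih, sub_add_cancel]

theorem slantedConvolution_sub_natCast (N j : ℕ) (a : R) :
    slantedConvolution N (a - j) j = slantedConvolution N a 0 := by
  induction j with
  | zero => simp
  | succ j ih =>
    rw [Nat.cast_succ, ← slantedConvolution_shift_one, ← ih]
    congr 1
    ring

theorem slantedConvolution_eq_sum_mul_left (N : ℕ) (a b : R) :
    slantedConvolution N a b =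
      ∑ q ∈ antidiagonal N, Ring.choose b q.1 * slantedConvolution q.2 a 0 := by
  simp only [slantedConvolution, Ring.add_choose_eq _ (Commute.all b _), mul_sum, zero_add]
  rw [sum_sigma', sum_sigma']
  refine sum_nbij' (fun s => ⟨(s.2.1, s.1.1 + s.2.2), (s.1.1, s.2.2)⟩)
    (fun s => ⟨(s.2.1, s.1.1 + s.2.2), (s.1.1, s.2.2)⟩) ?_ ?_ ?_ ?_ ?_
  · rintro ⟨⟨m, k⟩, ⟨j, i⟩⟩ h
    simp only [mem_sigma, HasAntidiagonal.mem_antidiagonal, and_true] at h ⊢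
    omega
  · rintro ⟨⟨m, k⟩, ⟨j, i⟩⟩ h
    simp only [mem_sigma, HasAntidiagonal.mem_antidiagonal, and_true] at h ⊢
    omega
  · rintro ⟨⟨m, k⟩, ⟨j, i⟩⟩ h
    simp only [mem_sigma, HasAntidiagonal.mem_antidiagonal] at h
    obtain ⟨-, rfl⟩ := h
    rfl
  · rintro ⟨⟨m, k⟩, ⟨j, i⟩⟩ h
    simp only [mem_sigma, HasAntidiagonal.mem_antidiagonal] at h
    obtain ⟨-, rfl⟩ := h
    rfl
  · rintro ⟨⟨m, k⟩, ⟨j, i⟩⟩ -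
    ring

theorem slantedConvolution_add_zero_eq_sum (N : ℕ) (a b : R) :
    slantedConvolution N (a + b) 0 =
      ∑ q ∈ antidiagonal N, Ring.choose b q.1 * slantedConvolution q.2 (a - q.1) q.1 := by
  simp only [slantedConvolution, add_comm a b, add_sub_assoc,
    Ring.add_choose_eq _ (Commute.all b _), mul_sum, sum_mul, zero_add, ← Nat.cast_add]
  rw [sum_sigma', sum_sigma']
  refine sum_nbij' (fun s => ⟨(s.2.1, s.2.2 + s.1.2), (s.2.2, s.1.2)⟩)
    (fun s => ⟨(s.1.1 + s.2.1, s.2.2), (s.1.1, s.2.1)⟩) ?_ ?_ ?_ ?_ ?_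
  · rintro ⟨⟨m, k⟩, ⟨j, i⟩⟩ h
    simp only [mem_sigma, HasAntidiagonal.mem_antidiagonal, and_true] at h ⊢
    omega
  · rintro ⟨⟨m, k⟩, ⟨j, i⟩⟩ h
    simp only [mem_sigma, HasAntidiagonal.mem_antidiagonal, and_true] at h ⊢
    omega
  · rintro ⟨⟨m, k⟩, ⟨j, i⟩⟩ h
    simp only [mem_sigma, HasAntidiagonal.mem_antidiagonal] at h
    obtain ⟨-, rfl⟩ := h
    rfl
  · rintro ⟨⟨m, k⟩, ⟨j, i⟩⟩ h
    simp only [mem_sigma, HasAntidiagonal.mem_antidiagonal] at h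
    obtain ⟨-, rfl⟩ := h
    rfl
  · rintro ⟨⟨m, k⟩, ⟨j, i⟩⟩ h
    simp only [mem_sigma, HasAntidiagonal.mem_antidiagonal] at h
    obtain ⟨-, rfl⟩ := h
    simp only [Nat.cast_add, sub_sub, mul_assoc]

theorem slantedConvolution_eq_add_zero (N : ℕ) (a b : R) :
    slantedConvolution N a b = slantedConvolution N (a + b) 0 := by
  rw [slantedConvolution_eq_sum_mul_left, slantedConvolution_add_zero_eq_sum]
  simp only [slantedConvolution_sub_natCast]

end BinomialConvolution

theorem stmt_16 (n : ℕ) (hn : 0 < n) (x y : ℚ) :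
    ∑ m ∈ Finset.Icc 1 n, Ring.choose (x - m) (m - 1) * Ring.choose (y + m) (n - m) =
      ∑ m ∈ Finset.range n, Ring.choose (x + y - m) m * (m.choose (n - 1 - m) : ℚ) := by
  obtain ⟨N, rfl⟩ : ∃ N, n = N + 1 := ⟨n - 1, by omega⟩
  have key := slantedConvolution_eq_add_zero N (x - 1) (y + 1)
  simp only [slantedConvolution, Nat.sum_antidiagonal_eq_sum_range_succ_mk, zero_add,
    Ring.choose_natCast, sub_add_add_cancel] at key
  rw [Nat.add_sub_cancel, ← key]
  symm
  refine sum_nbij' (· + 1) (· - 1) ?_ ?_ ?_ ?_ fun m _ => ?_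
  · intro m h
    simp only [mem_range, mem_Icc] at h ⊢
    omega
  · intro m h
    simp only [mem_range, mem_Icc] at h ⊢
    omega
  · intro m _
    simp
  · intro m h
    exact Nat.sub_add_cancel (mem_Icc.mp h).1
  · simp only [Nat.cast_add, Nat.cast_one, Nat.add_sub_cancel, Nat.add_sub_add_right, sub_sub,
      add_assoc, add_comm (1 : ℚ)]
end
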